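/- Let V be a real reflexive Banach space, V₁, …, V_N closed subspaces of V, |·| a continuous seminorm on V, and F : V → ℝ convex and Gâteaux differentiable with Gâteaux derivative F', with F(v + φ) = F(v) for all v ∈ V and φ ∈ ker|·|. Let u ∈ V minimize F over V, let τ > 0 satisfy the strengthened convexity condition, and let (u^n) be generated by the PSC iteration with exact local problems from u⁰ ∈ V. Let q > 1 and suppose there exist constants C > 0 and μ > 0 such that: (i) for all v, w ∈ V with F(v) ≤ F(u⁰) and F(v + w) ≤ F(u⁰), there exist φ ∈ ker|·| and w_j ∈ V_j with Σ_{j=1}^N w_j = w + φ and Σ_{j=1}^N d_F(w_j; v) ≤ (C/q)|w|^q; (ii) F(v) − F(u) ≥ (μ/q)|v − u|^q for every v ∈ V with F(v) ≤ F(u⁰). Set ζ_n = F(u^n) − F(u). Then for all n ≥ 0, ζ_n ≤ (1 − τ(1 − 1/q)·min{1, μ/(qC)}^{1/(q−1)})^n · ζ₀. -/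

import Mathlib

/-- `f` is the Gâteaux derivative of `F` at `v`. -/
def HasGateauxDerivAt {V : Type*} [NormedAddCommGroup V] [NormedSpace ℝ V]
    (F : V → ℝ) (f : V →L[ℝ] ℝ) (v : V) : Prop :=
  ∀ w : V, Filter.Tendsto (fun t : ℝ => (F (v + t • w) - F v) / t)
    (nhdsWithin (0 : ℝ) {(0 : ℝ)}ᶜ) (nhds (f w))

/-!
Let `v` lie in the initial sublevel set. Since the exact local corrections do at least as well as
any other ones, the strengthened convexity condition bounds the change of energy in a step from `v`
by `τ` times the sum of the local increments along a stable decomposition of `t • (ustar - v)`. The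
derivative contributes at most `-t (F v - F ustar)` to this sum, and by sharpness the Bregman
distances contribute at most `(C / μ) t ^ q (F v - F ustar)`. Hence one step contracts the energy
error by the factor `1 - τ (t - (C / μ) t ^ q)`, which on `[0, 1]` is smallest at
`t = (min 1 (μ / (q C))) ^ (1 / (q - 1))`.
-/

theorem le_pow_mul_of_succ_le {a : ℕ → ℝ} {r : ℝ} (ha : ∀ n, 0 ≤ a n)
    (h : ∀ n, a (n + 1) ≤ r * a n) (n : ℕ) : a n ≤ r ^ n * a 0 := by
  rcases le_or_gt 0 r with hr | hr
  · exact le_geom hr n fun k _ => h k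
  · have hzero : ∀ k, a k = 0 := fun k =>
      le_antisymm (nonpos_of_mul_nonneg_right ((ha (k + 1)).trans (h k)) hr) (ha k)
    simp [hzero]

theorem rpow_one_div_sub_one_rpow {m q : ℝ} (hm : 0 ≤ m) (hq : 1 < q) :
    (m ^ (1 / (q - 1))) ^ q = m * m ^ (1 / (q - 1)) := by
  have hq' : 0 < q - 1 := sub_pos.2 hq
  have hexp : 1 / (q - 1) * q = 1 + 1 / (q - 1) := by field_simp; ring
  rw [← Real.rpow_mul hm, hexp, Real.rpow_add_of_nonneg hm zero_le_one (by positivity),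
    Real.rpow_one]

/-- The point of `[0, 1]` at which `t ↦ t - (C / μ) * t ^ q` is largest; it determines the
contraction factor of the iteration. -/
noncomputable def optimalStep (q C μ : ℝ) : ℝ :=
  (min 1 (μ / (q * C))) ^ (1 / (q - 1))

section OptimalStep

variable {q C μ : ℝ}

theorem optimalStep_mem_Icc (hq : 1 < q) (hC : 0 ≤ C) (hμ : 0 ≤ μ) :
    optimalStep q C μ ∈ Set.Icc 0 1 := by
  have hmin : 0 ≤ min 1 (μ / (q * C)) := le_min zero_le_one (by positivity)
  exact ⟨Real.rpow_nonneg hmin _,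
    Real.rpow_le_one hmin (min_le_left _ _) (one_div_nonneg.2 (sub_pos.2 hq).le)⟩

theorem div_mul_optimalStep_rpow_le (hq : 1 < q) (hC : 0 < C) (hμ : 0 < μ) :
    C / μ * optimalStep q C μ ^ q ≤ 1 / q * optimalStep q C μ := by
  have hmin : 0 ≤ min 1 (μ / (q * C)) := le_min zero_le_one (by positivity)
  calc C / μ * optimalStep q C μ ^ q
      = C / μ * min 1 (μ / (q * C)) * optimalStep q C μ := by
        rw [optimalStep, rpow_one_div_sub_one_rpow hmin hq, mul_assoc]
    _ ≤ C / μ * (μ / (q * C)) * optimalStep q C μ := by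
        gcongr
        · exact (optimalStep_mem_Icc hq hC.le hμ.le).1
        · exact min_le_right _ _
    _ = 1 / q * optimalStep q C μ := by field_simp

end OptimalStep

namespace HasGateauxDerivAt

variable {V : Type*} [NormedAddCommGroup V] [NormedSpace ℝ V]
  {F : V → ℝ} {f : V →L[ℝ] ℝ} {v : V}

theorem hasLineDerivAt (hf : HasGateauxDerivAt F f v) (w : V) :
    HasLineDerivAt ℝ F (f w) v w := by
  simpa only [hasLineDerivAt_iff_tendsto_slope_zero, smul_eq_mul, div_eq_inv_mul] using hf w

theorem apply_eq_zero (hf : HasGateauxDerivAt F f v) {φ : V}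
    (hφ : ∀ t : ℝ, F (v + t • φ) = F v) : f φ = 0 := by
  have hline : HasDerivAt (fun t : ℝ => F (v + t • φ)) (f φ) 0 := hf.hasLineDerivAt φ
  simp only [hφ] at hline
  exact hline.unique (hasDerivAt_const 0 (F v))

theorem apply_le_sub (hf : HasGateauxDerivAt F f v) (hF : ConvexOn ℝ Set.univ F) (w : V) :
    f w ≤ F (v + w) - F v := by
  have hline : ConvexOn ℝ Set.univ fun t : ℝ => F (v + t • w) := by
    simpa [Function.comp_def, AffineMap.lineMap_apply, add_comm] using
      hF.comp_affineMap (AffineMap.lineMap v (v + w))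
  simpa [slope_def_field] using hline.le_slope_of_hasDerivAt
    (Set.mem_univ 0) (Set.mem_univ 1) zero_lt_one (hf.hasLineDerivAt w)

end HasGateauxDerivAt

section ParallelSubspaceCorrection

variable {V ι : Type*} [AddCommGroup V] [Module ℝ V] [Fintype ι]

/-- The strengthened convexity condition with relaxation parameter `τ`, for arbitrary sets `K j` of
admissible local corrections in place of subspaces. -/
def StrengthenedConvexity (F : V → ℝ) (K : ι → Set V) (τ : ℝ) : Prop :=
  ∀ (v : V) (z : ι → V), (∀ j, z j ∈ K j) →
    F (v + τ • ∑ j, z j) ≤ (1 - τ * Fintype.card ι) * F v + τ * ∑ j, F (v + z j)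

/-- One step `v ↦ v'` of the parallel subspace correction method with exact local problems:
every `w j` minimizes `F (v + ·)` over `K j`. -/
def IsPSCStep (F : V → ℝ) (K : ι → Set V) (τ : ℝ) (v v' : V) : Prop :=
  ∃ w : ι → V, (∀ j, w j ∈ K j) ∧ (∀ j, ∀ x ∈ K j, F (v + w j) ≤ F (v + x)) ∧
    v' = v + τ • ∑ j, w j

/-- The Bregman distance `d_F(w; v)`, with `f` in the role of the derivative of `F` at `v`. -/
def bregmanDist [TopologicalSpace V] (F : V → ℝ) (f : V →L[ℝ] ℝ) (v w : V) : ℝ :=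
  F (v + w) - F v - f w

/-- `z` splits, up to an element of the kernel of `p`, into local corrections whose Bregman
distances at `v` add up to at most `B`. -/
def HasStableDecomposition [TopologicalSpace V] (F : V → ℝ) (f : V →L[ℝ] ℝ) (K : ι → Set V)
    (p : Seminorm ℝ V) (B : ℝ) (v z : V) : Prop :=
  ∃ (φ : V) (x : ι → V), p φ = 0 ∧ (∀ j, x j ∈ K j) ∧ ∑ j, x j = z + φ ∧
    ∑ j, bregmanDist F f v (x j) ≤ B

variable {F : V → ℝ} {K : ι → Set V} {τ : ℝ} {v v' : V}

namespace IsPSCStep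

theorem sub_le (hstep : IsPSCStep F K τ v v') (hsc : StrengthenedConvexity F K τ) (hτ : 0 ≤ τ)
    {x : ι → V} (hx : ∀ j, x j ∈ K j) :
    F v' - F v ≤ τ * ∑ j, (F (v + x j) - F v) := by
  obtain ⟨w, hw, hwmin, rfl⟩ := hstep
  calc F (v + τ • ∑ j, w j) - F v
      ≤ (1 - τ * Fintype.card ι) * F v + τ * ∑ j, F (v + w j) - F v :=
        sub_le_sub_right (hsc v w hw) _
    _ = τ * ∑ j, (F (v + w j) - F v) := by
        simp only [Finset.sum_sub_distrib, Finset.sum_const, Finset.card_univ, nsmul_eq_mul]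
        ring
    _ ≤ τ * ∑ j, (F (v + x j) - F v) := by
        gcongr with j
        exact hwmin j _ (hx j)

variable [TopologicalSpace V] {f : V →L[ℝ] ℝ} {p : Seminorm ℝ V}

theorem sub_le_of_hasStableDecomposition (hstep : IsPSCStep F K τ v v')
    (hsc : StrengthenedConvexity F K τ) (hτ : 0 ≤ τ) (hker : ∀ φ, p φ = 0 → f φ = 0)
    {B : ℝ} {z : V} (hz : HasStableDecomposition F f K p B v z) :
    F v' - F v ≤ τ * (B + f z) := by
  obtain ⟨φ, x, hφ, hx, hsum, hB⟩ := hz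
  have hlinear : ∑ j, f (x j) = f z := by
    rw [← map_sum, hsum, map_add, hker φ hφ, add_zero]
  calc F v' - F v ≤ τ * ∑ j, (F (v + x j) - F v) := hstep.sub_le hsc hτ hx
    _ = τ * (∑ j, bregmanDist F f v (x j) + f z) := by
        simp only [bregmanDist, Finset.sum_sub_distrib, ← hlinear, sub_add_cancel]
    _ ≤ τ * (B + f z) := by gcongr

theorem sub_le_mul_sub (hstep : IsPSCStep F K τ v v') (hsc : StrengthenedConvexity F K τ)
    (hτ : 0 ≤ τ) (hker : ∀ φ, p φ = 0 → f φ = 0) {ustar : V} {q C μ t : ℝ}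
    (hC : 0 ≤ C) (hμ : 0 < μ) (ht : 0 ≤ t) (hf : f (ustar - v) ≤ F ustar - F v)
    (hstable : HasStableDecomposition F f K p (C / q * p (t • (ustar - v)) ^ q) v
      (t • (ustar - v)))
    (hsharp : μ / q * p (v - ustar) ^ q ≤ F v - F ustar) :
    F v' - F ustar ≤ (1 - τ * (t - C / μ * t ^ q)) * (F v - F ustar) := by
  have hdecomp : C / q * p (t • (ustar - v)) ^ q ≤ C / μ * t ^ q * (F v - F ustar) := by
    calc C / q * p (t • (ustar - v)) ^ q
        = C / μ * t ^ q * (μ / q * p (v - ustar) ^ q) := by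
          rw [map_smul_eq_mul, Real.norm_of_nonneg ht, map_sub_rev p ustar v,
            Real.mul_rpow ht (apply_nonneg p _)]
          field_simp
      _ ≤ C / μ * t ^ q * (F v - F ustar) := by gcongr
  have hlinear : f (t • (ustar - v)) ≤ t * (F ustar - F v) := by
    rw [map_smul, smul_eq_mul]
    gcongr
  calc F v' - F ustar = F v' - F v + (F v - F ustar) := by ring
    _ ≤ τ * (C / q * p (t • (ustar - v)) ^ q + f (t • (ustar - v))) + (F v - F ustar) := by
        gcongr
        exact hstep.sub_le_of_hasStableDecomposition hsc hτ hker hstable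
    _ ≤ τ * (C / μ * t ^ q * (F v - F ustar) + t * (F ustar - F v)) + (F v - F ustar) := by
        gcongr
    _ = (1 - τ * (t - C / μ * t ^ q)) * (F v - F ustar) := by ring

end IsPSCStep

end ParallelSubspaceCorrection

theorem IsPSCStep.sub_le_optimalStep_mul_sub {V ι : Type*} [NormedAddCommGroup V]
    [NormedSpace ℝ V] [Fintype ι] {F : V → ℝ} {f : V →L[ℝ] ℝ} {K : ι → Set V}
    {p : Seminorm ℝ V} {τ q C μ : ℝ} {v v' ustar : V} (hstep : IsPSCStep F K τ v v')
    (hconv : ConvexOn ℝ Set.univ F) (hf : HasGateauxDerivAt F f v)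
    (hinv : ∀ φ, p φ = 0 → F (v + φ) = F v) (hle : F ustar ≤ F v)
    (hτ : 0 ≤ τ) (hsc : StrengthenedConvexity F K τ) (hq : 1 < q) (hC : 0 < C) (hμ : 0 < μ)
    (hstable : ∀ z, F (v + z) ≤ F v →
      HasStableDecomposition F f K p (C / q * p z ^ q) v z)
    (hsharp : μ / q * p (v - ustar) ^ q ≤ F v - F ustar) :
    F v' - F ustar ≤ (1 - τ * (1 - 1 / q) * optimalStep q C μ) * (F v - F ustar) := by
  have ht := optimalStep_mem_Icc hq hC.le hμ.le
  have hopt := div_mul_optimalStep_rpow_le hq hC hμ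
  set t := optimalStep q C μ
  have hker : ∀ φ, p φ = 0 → f φ = 0 := fun φ hφ =>
    hf.apply_eq_zero fun s => hinv _ (by rw [map_smul_eq_mul, hφ, mul_zero])
  have hgrad : f (ustar - v) ≤ F ustar - F v := by
    simpa only [add_sub_cancel] using hf.apply_le_sub hconv (ustar - v)
  have hsegment : v + t • (ustar - v) ∈ segment ℝ v ustar := by
    rw [segment_eq_image']
    exact Set.mem_image_of_mem _ ht
  have hsublevel : F (v + t • (ustar - v)) ≤ F v :=
    (hconv.le_max_of_mem_segment (Set.mem_univ v) (Set.mem_univ ustar) hsegment).trans_eq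
      (max_eq_left hle)
  calc F v' - F ustar ≤ (1 - τ * (t - C / μ * t ^ q)) * (F v - F ustar) :=
        hstep.sub_le_mul_sub hsc hτ hker hC.le hμ ht.1 hgrad (hstable _ hsublevel) hsharp
    _ ≤ (1 - τ * (t - 1 / q * t)) * (F v - F ustar) := by gcongr
    _ = (1 - τ * (1 - 1 / q) * t) * (F v - F ustar) := by ring

theorem stmt_9_general {V ι : Type*} [NormedAddCommGroup V] [NormedSpace ℝ V] [Fintype ι]
    {K : ι → Set V} {p : Seminorm ℝ V} {F : V → ℝ} (hconv : ConvexOn ℝ Set.univ F)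
    {F' : V → V →L[ℝ] ℝ} (hF' : ∀ v, HasGateauxDerivAt F (F' v) v)
    (hinv : ∀ v φ, p φ = 0 → F (v + φ) = F v)
    {ustar : V} (hmin : ∀ v, F ustar ≤ F v)
    {τ : ℝ} (hτ : 0 ≤ τ) (hsc : StrengthenedConvexity F K τ)
    {u : ℕ → V} (hstep : ∀ n, IsPSCStep F K τ (u n) (u (n + 1)))
    {q C μ : ℝ} (hq : 1 < q) (hC : 0 < C) (hμ : 0 < μ)
    (hstable : ∀ v z, F v ≤ F (u 0) → F (v + z) ≤ F (u 0) →
      HasStableDecomposition F (F' v) K p (C / q * p z ^ q) v z)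
    (hsharp : ∀ v, F v ≤ F (u 0) → μ / q * p (v - ustar) ^ q ≤ F v - F ustar) (n : ℕ) :
    F (u n) - F ustar ≤
      (1 - τ * (1 - 1 / q) * (min 1 (μ / (q * C))) ^ (1 / (q - 1))) ^ n *
        (F (u 0) - F ustar) := by
  have hcontract : ∀ k, F (u k) ≤ F (u 0) → F (u (k + 1)) - F ustar ≤
      (1 - τ * (1 - 1 / q) * optimalStep q C μ) * (F (u k) - F ustar) := fun k hk =>
    (hstep k).sub_le_optimalStep_mul_sub hconv (hF' _) (hinv _) (hmin _) hτ hsc hq hC hμ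
      (fun z hz => hstable _ z hk (hz.trans hk)) (hsharp _ hk)
  have hfactor : 1 - τ * (1 - 1 / q) * optimalStep q C μ ≤ 1 := by
    have ht := (optimalStep_mem_Icc hq hC.le hμ.le).1
    have hq' : 0 ≤ 1 - 1 / q :=
      sub_nonneg.2 ((div_le_one (zero_lt_one.trans hq)).2 hq.le)
    exact sub_le_self _ (by positivity)
  have hsublevel : ∀ k, F (u k) ≤ F (u 0) := fun k => by
    induction k with
    | zero => exact le_rfl
    | succ k ih =>
      have hdescent := (hcontract k ih).trans
        (mul_le_of_le_one_left (sub_nonneg.2 (hmin _)) hfactor)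
      exact ((sub_le_sub_iff_right _).1 hdescent).trans ih
  exact le_pow_mul_of_succ_le (a := fun k => F (u k) - F ustar)
    (fun k => sub_nonneg.2 (hmin _)) (fun k => hcontract k (hsublevel k)) n

/-- linear convergence of the PSC method under a sharpness condition with
matching exponents `p = q` (Theorem 4.14(a)). -/
theorem stmt_9 {V : Type*} [NormedAddCommGroup V] [NormedSpace ℝ V] [CompleteSpace V]
    (hrefl : Function.Surjective (NormedSpace.inclusionInDoubleDual ℝ V))
    (N : ℕ) (Vj : Fin N → Submodule ℝ V) (hVjc : ∀ j, IsClosed ((Vj j : Set V)))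
    (p : Seminorm ℝ V) (hpc : Continuous (p : V → ℝ))
    (F : V → ℝ) (hconv : ConvexOn ℝ Set.univ F)
    (F' : V → V →L[ℝ] ℝ) (hF' : ∀ v : V, HasGateauxDerivAt F (F' v) v)
    (hinv : ∀ v φ : V, p φ = 0 → F (v + φ) = F v)
    (ustar : V) (hmin : ∀ v : V, F ustar ≤ F v)
    (τ : ℝ) (hτ : 0 < τ)
    (hsc : ∀ (v : V) (z : Fin N → V), (∀ j, z j ∈ Vj j) →
      (1 - τ * (N : ℝ)) * F v + τ * ∑ j, F (v + z j) ≥ F (v + τ • ∑ j, z j))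
    (u : ℕ → V) (w : ℕ → Fin N → V)
    (hwmem : ∀ n j, w n j ∈ Vj j)
    (hwmin : ∀ n j, ∀ x ∈ Vj j, F (u n + w n j) ≤ F (u n + x))
    (hupd : ∀ n : ℕ, u (n + 1) = u n + τ • ∑ j, w n j)
    (q : ℝ) (hq : 1 < q)
    (C μ : ℝ) (hC : 0 < C) (hμ : 0 < μ)
    (hstable : ∀ v z : V, F v ≤ F (u 0) → F (v + z) ≤ F (u 0) →
      ∃ (φ : V) (wj : Fin N → V), p φ = 0 ∧ (∀ j, wj j ∈ Vj j) ∧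
        (∑ j, wj j) = z + φ ∧
        (∑ j, (F (v + wj j) - F v - F' v (wj j))) ≤ (C / q) * (p z) ^ q)
    (hsharp : ∀ v : V, F v ≤ F (u 0) → (μ / q) * (p (v - ustar)) ^ q ≤ F v - F ustar) :
    ∀ n : ℕ, F (u n) - F ustar ≤
      (1 - τ * (1 - 1 / q) * (min 1 (μ / (q * C))) ^ (1 / (q - 1))) ^ n *
        (F (u 0) - F ustar) := by
  exact stmt_9_general (K := fun j => (Vj j : Set V)) hconv hF' hinv hmin hτ.le
    (by simpa [StrengthenedConvexity] using hsc) (fun n => ⟨w n, hwmem n, hwmin n, hupd n⟩)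
    hq hC hμ hstable hsharp
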